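/- arXiv:2011.10876 — 6 statements merged into one kernel-verified Lean document; each statement's English description precedes it below -/
import Mathlib

section
/- Suppose there exist a constant C > 0 and a function κ of class K∞ such that for all i ∈ ℕ and all x_i ∈ ℝ^{n_i}, x̄_i ∈ X(I_i), u_i ∈ ℝ^{p_i} one has |f_i(x_i, x̄_i, u_i)| ≤ C + κ(|x_i|) + κ(|x̄_i|) + κ(|u_i|). Then the network Σ is well-posed, and moreover there exist C' > 0 and κ' of class K∞ such that |f(x,u)|_∞ ≤ C' + κ'(|x|_∞) + κ'(|u|_∞) for all x ∈ X and u ∈ U. -/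
noncomputable section

/-- Class `K` comparison functions on `[0,∞)`. -/
def ClassK (γ : ℝ → ℝ) : Prop :=
  ContinuousOn γ (Set.Ici 0) ∧ StrictMonoOn γ (Set.Ici 0) ∧ γ 0 = 0

/-- Class `K∞` comparison functions: class `K` and unbounded. -/
def ClassKinf (γ : ℝ → ℝ) : Prop :=
  ClassK γ ∧ ∀ c : ℝ, ∃ s : ℝ, 0 ≤ s ∧ c < γ s

section Network

variable {E : ℕ → Type*} [∀ i, NormedAddCommGroup (E i)]
variable {P : ℕ → Type*} [∀ i, NormedAddCommGroup (P i)]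

/-- Membership in `ℓ∞(ℕ,(n_i))`: a uniformly bounded sequence. -/
def Bdd {G : ℕ → Type*} [∀ i, NormedAddCommGroup (G i)] (x : ∀ i, G i) : Prop :=
  ∃ C : ℝ, ∀ i, ‖x i‖ ≤ C

/-- The sup norm `|x|_∞ = sup_i |x_i|`. -/
def supNorm {G : ℕ → Type*} [∀ i, NormedAddCommGroup (G i)] (x : ∀ i, G i) : ℝ :=
  ⨆ i, ‖x i‖

variable (I : ℕ → Finset ℕ)

/-- The network map `f(x,u) = (f_i(x_i, x̄_i, u_i))_{i∈ℕ}`. -/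
def netF (f : ∀ i, E i → ((j : I i) → E j.1) → P i → E i)
    (x : ∀ i, E i) (u : ∀ i, P i) : ∀ i, E i :=
  fun i => f i (x i) (fun j => x j.1) (u i)

theorem stmt0
    [∀ i, NormedSpace ℝ (E i)] [∀ i, FiniteDimensional ℝ (E i)] [∀ i, Nontrivial (E i)]
    [∀ i, NormedSpace ℝ (P i)] [∀ i, FiniteDimensional ℝ (P i)] [∀ i, Nontrivial (P i)]
    (hself : ∀ i, i ∉ I i)
    (hloc : ∀ i, {j | i ∈ I j}.Finite)
    (f : ∀ i, E i → ((j : I i) → E j.1) → P i → E i)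
    (hf : ∀ i, Continuous fun q : E i × ((j : I i) → E j.1) × P i => f i q.1 q.2.1 q.2.2)
    (C : ℝ) (hC : 0 < C) (κ : ℝ → ℝ) (hκ : ClassKinf κ)
    (hbound : ∀ (i : ℕ) (xi : E i) (xb : (j : I i) → E j.1) (ui : P i),
      ‖f i xi xb ui‖ ≤ C + κ ‖xi‖ + κ ‖xb‖ + κ ‖ui‖) :
    (∀ (x : ∀ i, E i) (u : ∀ i, P i), Bdd x → Bdd u → Bdd (netF I f x u)) ∧
      ∃ C' : ℝ, 0 < C' ∧ ∃ κ' : ℝ → ℝ, ClassKinf κ' ∧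
        ∀ (x : ∀ i, E i) (u : ∀ i, P i), Bdd x → Bdd u →
          supNorm (netF I f x u) ≤ C' + κ' (supNorm x) + κ' (supNorm u) := by
  obtain ⟨⟨hcont, hmono, h0⟩, hunb⟩ := hκ
  have key : ∀ (x : ∀ i, E i) (u : ∀ i, P i), Bdd x → Bdd u →
      ∀ i, ‖netF I f x u i‖ ≤ C + 2 * κ (supNorm x) + 2 * κ (supNorm u) := by
    rintro x u ⟨a, ha⟩ ⟨b, hb⟩ i
    have hx : ∀ j, ‖x j‖ ≤ supNorm x := fun j =>
      le_ciSup (f := fun j => ‖x j‖) ⟨a, by rintro _ ⟨k, rfl⟩; exact ha k⟩ j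
    have hu : ∀ j, ‖u j‖ ≤ supNorm u := fun j =>
      le_ciSup (f := fun j => ‖u j‖) ⟨b, by rintro _ ⟨k, rfl⟩; exact hb k⟩ j
    have hx0 : 0 ≤ supNorm x := (norm_nonneg _).trans (hx 0)
    have hu0 : 0 ≤ supNorm u := (norm_nonneg _).trans (hu 0)
    have hm : ∀ s t : ℝ, 0 ≤ s → s ≤ t → κ s ≤ κ t := fun s t hs hst =>
      hmono.monotoneOn (Set.mem_Ici.2 hs) (Set.mem_Ici.2 (hs.trans hst)) hst
    have h1 := hm _ _ (norm_nonneg (x i)) (hx i)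
    have h2 := hm _ _ (norm_nonneg (u i)) (hu i)
    have hb' : ‖(fun j : I i => x j.1)‖ ≤ supNorm x :=
      (pi_norm_le_iff_of_nonneg hx0).2 fun j => hx j.1
    have h3 := hm _ _ (norm_nonneg _) hb'
    have h4 := hbound i (x i) (fun j => x j.1) (u i)
    have h5 := hm 0 _ le_rfl hu0
    have h6 : ‖netF I f x u i‖ = ‖f i (x i) (fun j => x j.1) (u i)‖ := rfl
    linarith
  refine ⟨fun x u hx hu => ⟨_, key x u hx hu⟩, C, hC, fun s => 2 * κ s,
    ⟨⟨continuousOn_const.mul hcont, ?_, by simp [h0]⟩, ?_⟩, fun x u hx hu => ciSup_le (key x u hx hu)⟩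
  · intro s hs t ht hst
    have := hmono hs ht hst
    show 2 * κ s < 2 * κ t
    linarith
  · intro c
    obtain ⟨s, hs, h⟩ := hunb (c / 2)
    refine ⟨s, hs, ?_⟩
    show c < 2 * κ s
    linarith

end Network
end
end

section
/- If the network Σ is well-posed, i.e. f maps X × U into X, then there exist a constant C > 0 and a function κ of class K∞ such that for all i ∈ ℕ and all x_i ∈ ℝ^{n_i}, x̄_i ∈ X(I_i), u_i ∈ ℝ^{p_i} one has |f_i(x_i, x̄_i, u_i)| ≤ C + κ(|x_i|) + κ(|x̄_i|) + κ(|u_i|). -/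
noncomputable section

section Network

variable {E : ℕ → Type*} [∀ i, NormedAddCommGroup (E i)]
variable {P : ℕ → Type*} [∀ i, NormedAddCommGroup (P i)]

variable (I : ℕ → Finset ℕ)

theorem kappa_exists (S : ℕ → ℝ) (hS : Monotone S) (h0 : ∀ n, 0 ≤ S n) :
    ∃ κ : ℝ → ℝ, ClassKinf κ ∧ ∀ s, 0 ≤ s → S ⌈s⌉₊ ≤ (1 + S 1) + κ s := by
  set m : ℝ → ℝ := fun t => 1 + S (⌈t⌉₊ + 1) with hm
  have hmono : Monotone m := by
    intro a b hab
    have := hS (Nat.add_le_add_right (Nat.ceil_mono hab) 1)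
    simp only [hm]; linarith
  have hint : ∀ a b : ℝ, IntervalIntegrable m MeasureTheory.volume a b :=
    fun a b => hmono.intervalIntegrable
  have hlow : ∀ (a b : ℝ), a ≤ b → m a * (b - a) ≤ ∫ t in a..b, m t := by
    intro a b hab
    have := intervalIntegral.integral_mono_on (f := fun _ => m a) (g := m) hab
      (by simp) (hint a b) (fun x hx => hmono hx.1)
    simpa [mul_comm] using this
  have hm1 : ∀ a, 1 ≤ m a := fun a => by have := h0 (⌈a⌉₊ + 1); simp only [hm]; linarith
  have hadd : ∀ a b : ℝ, (∫ t in (0:ℝ)..b, m t) = (∫ t in (0:ℝ)..a, m t) + ∫ t in a..b, m t :=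
    fun a b => (intervalIntegral.integral_add_adjacent_intervals (hint 0 a) (hint a b)).symm
  have hpos : ∀ s : ℝ, 0 ≤ s → s ≤ ∫ t in (0:ℝ)..s, m t := by
    intro s hs
    have := hlow 0 s hs
    have := hm1 0
    nlinarith
  refine ⟨fun s => ∫ t in (0:ℝ)..s, m t, ⟨⟨?_, ?_, ?_⟩, ?_⟩, ?_⟩
  · exact (intervalIntegral.continuous_primitive hint 0).continuousOn
  · intro a _ b _ hab
    have h1 := hlow a b hab.le
    have h2 := hm1 a
    have h3 := hadd a b
    simp only
    nlinarith
  · simp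
  · intro c
    refine ⟨|c| + 1, by positivity, ?_⟩
    have := hpos (|c| + 1) (by positivity)
    have := le_abs_self c
    simp only
    linarith
  · intro s hs
    rcases le_total s 1 with h | h
    · have h1 : S ⌈s⌉₊ ≤ S 1 := hS (by simpa using h)
      have := hpos s hs
      simp only
      linarith
    · have h1 := hlow (s - 1) s (by linarith)
      have h2 := hadd (s - 1) s
      have h3 := hpos (s - 1) (by linarith)
      have h4 : S ⌈s⌉₊ ≤ S (⌈s - 1⌉₊ + 1) := by
        apply hS
        rw [← Nat.ceil_add_one (by linarith)]
        simp
      have h5 := h0 1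
      simp only [hm] at *
      linarith

theorem unif_bound
    [∀ i, NormedSpace ℝ (E i)] [∀ i, FiniteDimensional ℝ (E i)]
    [∀ i, NormedSpace ℝ (P i)] [∀ i, FiniteDimensional ℝ (P i)]
    (hloc : ∀ i, {j | i ∈ I j}.Finite)
    (f : ∀ i, E i → ((j : I i) → E j.1) → P i → E i)
    (hf : ∀ i, Continuous fun q : E i × ((j : I i) → E j.1) × P i => f i q.1 q.2.1 q.2.2)
    (hwp : ∀ (x : ∀ i, E i) (u : ∀ i, P i), Bdd x → Bdd u → Bdd (netF I f x u))
    (r : ℝ) (hr : 0 ≤ r) :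
    ∃ M : ℝ, ∀ (i : ℕ) (y : ∀ i, E i) (w : ∀ i, P i), (∀ j, ‖y j‖ ≤ r) → (∀ j, ‖w j‖ ≤ r) →
      ‖netF I f y w i‖ ≤ M := by
  have : ∀ i, ProperSpace (E i) := fun i => FiniteDimensional.proper ℝ (E i)
  have : ∀ i, ProperSpace (P i) := fun i => FiniteDimensional.proper ℝ (P i)
  have hloc1 : ∀ i, ∃ M : ℝ, ∀ (y : ∀ i, E i) (w : ∀ i, P i), (∀ j, ‖y j‖ ≤ r) →
      (∀ j, ‖w j‖ ≤ r) → ‖netF I f y w i‖ ≤ M := by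
    intro i
    obtain ⟨M, hM⟩ := (isCompact_closedBall
      (0 : E i × ((j : I i) → E j.1) × P i) r).exists_bound_of_continuousOn (hf i).continuousOn
    refine ⟨M, fun y w hy hw => hM (y i, fun j => y j.1, w i) ?_⟩
    rw [mem_closedBall_zero_iff, norm_prod_le_iff, norm_prod_le_iff]
    exact ⟨hy i, (pi_norm_le_iff_of_nonneg hr).2 fun j => hy j.1, hw i⟩
  choose L hL using hloc1
  by_contra hcon
  push Not at hcon
  let N : ℕ → Finset ℕ := fun i => insert i (I i)
  obtain ⟨g, hgP, hgr⟩ := exists_seq_of_forall_finset_exists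
    (fun p : ℕ × ℕ => ∃ (y : ∀ i, E i) (w : ∀ i, P i), (∀ j, ‖y j‖ ≤ r) ∧ (∀ j, ‖w j‖ ≤ r) ∧
      (p.2 : ℝ) < ‖netF I f y w p.1‖)
    (fun p q => Disjoint (N p.1) (N q.1) ∧ p.2 < q.2) (by
      intro s _
      let U : Finset ℕ := s.biUnion fun p => N p.1
      have hBfin : (⋃ j ∈ U, ({j} ∪ {k | j ∈ I k} : Set ℕ)).Finite :=
        U.finite_toSet.biUnion fun j _ => (Set.finite_singleton j).union (hloc j)
      set B := hBfin.toFinset with hB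
      obtain ⟨m, hm⟩ := exists_nat_gt (∑ b ∈ B, |L b|)
      let m' := m + ∑ p ∈ s, p.2 + 1
      obtain ⟨i, y, w, hy, hw, hlt⟩ := hcon m'
      refine ⟨(i, m'), ⟨y, w, hy, hw, hlt⟩, fun p hp => ⟨?_, ?_⟩⟩
      · have hi : i ∉ B := by
          intro hi
          have h1 := Finset.single_le_sum (f := fun b => |L b|) (fun b _ => abs_nonneg _) hi
          have h2 := hL i y w hy hw
          have h3 := le_abs_self (L i)
          have h4 : (m : ℝ) ≤ m' := by exact_mod_cast (by omega : m ≤ m')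
          linarith
        rw [Finset.disjoint_left]
        intro a ha hai
        apply hi
        rw [hB, Set.Finite.mem_toFinset]
        refine Set.mem_biUnion (x := a) (Finset.mem_biUnion.2 ⟨p, hp, ha⟩) ?_
        rcases Finset.mem_insert.1 hai with h | h
        · left; exact h.symm
        · right; exact h
      · have := Finset.single_le_sum (f := fun p : ℕ × ℕ => p.2) (fun b _ => Nat.zero_le _) hp
        simp only at this ⊢
        omega)
  choose y w hy hw hlt using hgP
  have hdisj : ∀ k l j, j ∈ N (g k).1 → j ∈ N (g l).1 → k = l := by
    intro k l j hk hl
    rcases lt_trichotomy k l with h | h | h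
    · exact absurd hl (Finset.disjoint_left.1 (hgr k l h).1 hk)
    · exact h
    · exact absurd hk (Finset.disjoint_left.1 (hgr l k h).1 hl)
  have hsel : ∀ j, ∃ k, ∀ l, j ∈ N (g l).1 → l = k := by
    intro j
    by_cases h : ∃ k, j ∈ N (g k).1
    · obtain ⟨k, hk⟩ := h
      exact ⟨k, fun l hl => hdisj l k j hl hk⟩
    · push Not at h
      exact ⟨0, fun l hl => absurd hl (h l)⟩
  choose c hc using hsel
  obtain ⟨C, hC⟩ := hwp (fun j => y (c j) j) (fun j => w (c j) j)
    ⟨r, fun j => hy _ _⟩ ⟨r, fun j => hw _ _⟩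
  have hmon : StrictMono fun k => (g k).2 := fun k l h => (hgr k l h).2
  obtain ⟨k, hk⟩ := exists_nat_gt C
  have h1 : (k : ℝ) ≤ (g k).2 := by exact_mod_cast hmon.le_apply
  have h2 := hC (g k).1
  have h3 := hlt k
  have h4 : netF I f (fun j => y (c j) j) (fun j => w (c j) j) (g k).1
      = netF I f (y k) (w k) (g k).1 := by
    have e : ∀ j ∈ N (g k).1, c j = k := fun j hj => (hc j k hj).symm
    have e0 := e _ (Finset.mem_insert_self _ _)
    have e1 : (fun j : I (g k).1 => y (c j.1) j.1) = fun j : I (g k).1 => y k j.1 := by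
      funext j
      rw [e _ (Finset.mem_insert_of_mem j.2)]
    simp only [netF]
    rw [e1, e0]
  rw [h4] at h2
  linarith

theorem stmt1
    [∀ i, NormedSpace ℝ (E i)] [∀ i, FiniteDimensional ℝ (E i)] [∀ i, Nontrivial (E i)]
    [∀ i, NormedSpace ℝ (P i)] [∀ i, FiniteDimensional ℝ (P i)] [∀ i, Nontrivial (P i)]
    (hself : ∀ i, i ∉ I i)
    (hloc : ∀ i, {j | i ∈ I j}.Finite)
    (f : ∀ i, E i → ((j : I i) → E j.1) → P i → E i)
    (hf : ∀ i, Continuous fun q : E i × ((j : I i) → E j.1) × P i => f i q.1 q.2.1 q.2.2)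
    (hwp : ∀ (x : ∀ i, E i) (u : ∀ i, P i), Bdd x → Bdd u → Bdd (netF I f x u)) :
    ∃ C : ℝ, 0 < C ∧ ∃ κ : ℝ → ℝ, ClassKinf κ ∧
      ∀ (i : ℕ) (xi : E i) (xb : (j : I i) → E j.1) (ui : P i),
        ‖f i xi xb ui‖ ≤ C + κ ‖xi‖ + κ ‖xb‖ + κ ‖ui‖ := by
  have hb : ∀ n : ℕ, ∃ M : ℝ, ∀ (i : ℕ) (y : ∀ i, E i) (w : ∀ i, P i),
      (∀ j, ‖y j‖ ≤ n) → (∀ j, ‖w j‖ ≤ n) → ‖netF I f y w i‖ ≤ M :=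
    fun n => unif_bound I hloc f hf hwp n n.cast_nonneg
  choose M hM using hb
  let S : ℕ → ℝ := fun n => ∑ k ∈ Finset.range (n + 1), |M k|
  have hS : Monotone S := fun a b hab =>
    Finset.sum_le_sum_of_subset_of_nonneg (Finset.range_mono (by omega))
      fun _ _ _ => abs_nonneg _
  have h0 : ∀ n, 0 ≤ S n := fun n => Finset.sum_nonneg fun _ _ => abs_nonneg _
  have hMS : ∀ n, M n ≤ S n := fun n => (le_abs_self _).trans
    (Finset.single_le_sum (f := fun k => |M k|) (fun _ _ => abs_nonneg _) (by simp))
  obtain ⟨κ, hκ, hle⟩ := kappa_exists S hS h0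
  refine ⟨1 + S 1, by linarith [h0 1], κ, hκ, ?_⟩
  intro i xi xb ui
  have hnn : ∀ s, 0 ≤ s → 0 ≤ κ s := by
    intro s hs
    have := hκ.1.2.1.monotoneOn (Set.mem_Ici.2 le_rfl) (Set.mem_Ici.2 hs) hs
    rwa [hκ.1.2.2] at this
  have key : ∀ s, ‖xi‖ ≤ s → ‖xb‖ ≤ s → ‖ui‖ ≤ s → ‖f i xi xb ui‖ ≤ (1 + S 1) + κ s := by
    intro s h1 h2 h3
    have hs : 0 ≤ s := (norm_nonneg _).trans h1
    refine le_trans ?_ (hle s hs)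
    refine le_trans ?_ (hMS _)
    have hsn : s ≤ (⌈s⌉₊ : ℝ) := Nat.le_ceil s
    classical
    let y0 : ∀ j, E j := fun j => if h : j ∈ I i then xb ⟨j, h⟩ else 0
    have := hM ⌈s⌉₊ i (Function.update y0 i xi) (Function.update (fun _ => 0) i ui) ?_ ?_
    · have e : (fun j : I i => Function.update y0 i xi j.1) = xb := by
        funext j
        have hne : j.1 ≠ i := fun h => hself i (by have := j.2; rwa [h] at this)
        rw [Function.update_of_ne hne]
        simp [y0]
      simp only [netF] at this
      rw [e] at this
      simpa using this
    · intro j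
      by_cases hj : j = i
      · subst hj
        simpa using h1.trans hsn
      · rw [Function.update_of_ne hj]
        by_cases h : j ∈ I i
        · simp only [y0, h, dite_true]
          exact (norm_le_pi_norm xb ⟨j, h⟩).trans (h2.trans hsn)
        · simp [y0, h]
    · intro j
      by_cases hj : j = i
      · subst hj
        simpa using h3.trans hsn
      · rw [Function.update_of_ne hj]
        simp
  have k1 := hnn _ (norm_nonneg xi)
  have k2 := hnn _ (norm_nonneg xb)
  have k3 := hnn _ (norm_nonneg ui)
  rcases le_total ‖xi‖ ‖xb‖ with a | a <;> rcases le_total ‖xb‖ ‖ui‖ with b | b <;>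
    rcases le_total ‖xi‖ ‖ui‖ with d | d <;>
    first
    | linarith [key ‖xi‖ le_rfl a d]
    | linarith [key ‖xb‖ a le_rfl b]
    | linarith [key ‖ui‖ d b le_rfl]
    | linarith [key ‖xi‖ le_rfl a (b.trans a)]
    | linarith [key ‖ui‖ (a.trans b) b le_rfl]

end Network
end
end

section
/- Let Σ be well-posed and A ⊆ X a nonempty closed set. Then Σ is ISS with respect to A if and only if f is K-bounded with respect to A and there exist M ∈ ℕ, β of class KL and γ of class K such that for every ξ ∈ X and every admissible input u, |x(Mk,ξ,u)|_A ≤ max{β(|ξ|_A, k), γ(‖u‖_∞)} for all k ∈ ℕ₀ (i.e. Σ^M is ISS with respect to A for some M). -/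
noncomputable section

/-- Class `KL` comparison functions. -/
def ClassKL (β : ℝ → ℝ → ℝ) : Prop :=
  ContinuousOn (fun p : ℝ × ℝ => β p.1 p.2) (Set.Ici 0 ×ˢ Set.Ici 0) ∧
    (∀ t : ℝ, 0 ≤ t → ClassK fun r => β r t) ∧
    (∀ r : ℝ, 0 < r → StrictAntiOn (β r) (Set.Ici 0) ∧
      Filter.Tendsto (fun t => β r t) Filter.atTop (nhds 0))

section System

variable {E : ℕ → Type*} [∀ i, NormedAddCommGroup (E i)]
variable {P : ℕ → Type*} [∀ i, NormedAddCommGroup (P i)]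

/-- Solution of the discrete-time system `x⁺ = F(x,u)` on `X = ℓ∞(ℕ,(n_i))`. -/
def traj (F : lp E ⊤ → lp P ⊤ → lp E ⊤) (ξ : lp E ⊤) (u : ℕ → lp P ⊤) : ℕ → lp E ⊤
  | 0 => ξ
  | k + 1 => F (traj F ξ u k) (u k)

/-- Admissible external inputs: uniformly bounded sequences in `U`. -/
def AdmInput (u : ℕ → lp P ⊤) : Prop :=
  ∃ C : ℝ, ∀ k, ‖u k‖ ≤ C

/-- `‖u‖_∞ = sup_k |u(k)|_∞`. -/
def inputNorm (u : ℕ → lp P ⊤) : ℝ :=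
  ⨆ k, ‖u k‖

/-- `Σ` is input-to-state stable with respect to the set `A`. -/
def ISS (F : lp E ⊤ → lp P ⊤ → lp E ⊤) (A : Set (lp E ⊤)) : Prop :=
  ∃ β γ : _, ClassKL β ∧ ClassK γ ∧
    ∀ (ξ : lp E ⊤) (u : ℕ → lp P ⊤), AdmInput u →
      ∀ k : ℕ, Metric.infDist (traj F ξ u k) A ≤
        max (β (Metric.infDist ξ A) (k : ℝ)) (γ (inputNorm u))

/-- `Σ` is exponentially input-to-state stable with respect to the set `A`. -/
def eISS (F : lp E ⊤ → lp P ⊤ → lp E ⊤) (A : Set (lp E ⊤)) : Prop :=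
  ∃ C ρ : ℝ, ∃ γ : ℝ → ℝ, 1 ≤ C ∧ 0 ≤ ρ ∧ ρ < 1 ∧ ClassK γ ∧
    ∀ (ξ : lp E ⊤) (u : ℕ → lp P ⊤), AdmInput u →
      ∀ k : ℕ, Metric.infDist (traj F ξ u k) A ≤
        max (C * ρ ^ k * Metric.infDist ξ A) (γ (inputNorm u))

/-- `f` is `K`-bounded with respect to `A`. -/
def KBounded (F : lp E ⊤ → lp P ⊤ → lp E ⊤) (A : Set (lp E ⊤)) : Prop :=
  ∃ κ₁ κ₂ : ℝ → ℝ, ClassK κ₁ ∧ ClassK κ₂ ∧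
    ∀ (ξ : lp E ⊤) (μ : lp P ⊤),
      Metric.infDist (F ξ μ) A ≤ κ₁ (Metric.infDist ξ A) + κ₂ ‖μ‖

theorem ClassK.nn {γ : ℝ → ℝ} (h : ClassK γ) {r : ℝ} (hr : 0 ≤ r) : 0 ≤ γ r := by
  have := h.2.1.monotoneOn (Set.mem_Ici.2 le_rfl) (Set.mem_Ici.2 hr) hr
  rwa [h.2.2] at this

theorem ClassK.mo {γ : ℝ → ℝ} (h : ClassK γ) {r s : ℝ} (hr : 0 ≤ r) (hs : r ≤ s) : γ r ≤ γ s :=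
  h.2.1.monotoneOn (Set.mem_Ici.2 hr) (Set.mem_Ici.2 (hr.trans hs)) hs

theorem ClassK.map_max {γ : ℝ → ℝ} (h : ClassK γ) {r s : ℝ} (hr : 0 ≤ r) (hs : 0 ≤ s) :
    γ (max r s) = max (γ r) (γ s) := by
  rcases le_total r s with h1 | h1
  · rw [max_eq_right h1, max_eq_right (h.mo hr h1)]
  · rw [max_eq_left h1, max_eq_left (h.mo hs h1)]

theorem ClassK.add' {γ δ : ℝ → ℝ} (h : ClassK γ) (h' : ClassK δ) : ClassK fun r => γ r + δ r :=
  ⟨h.1.add h'.1, fun _ hx _ hy hxy => add_lt_add (h.2.1 hx hy hxy) (h'.2.1 hx hy hxy),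
    by simp [h.2.2, h'.2.2]⟩

theorem ClassK.comp' {γ δ : ℝ → ℝ} (h : ClassK γ) (h' : ClassK δ) : ClassK fun r => γ (δ r) :=
  ⟨h.1.comp h'.1 fun _ hx => h'.nn hx,
    fun _ hx _ hy hxy => h.2.1 (h'.nn hx) (h'.nn hy) (h'.2.1 hx hy hxy),
    by simp [h.2.2, h'.2.2]⟩

theorem ClassK.idK : ClassK fun r => r :=
  ⟨continuousOn_id, fun _ _ _ _ h => h, rfl⟩

theorem KL_stretch {β : ℝ → ℝ → ℝ} (hβ : ClassKL β) {a : ℝ → ℝ} (ha : ClassK a) {M : ℕ}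
    (hM : 0 < M) :
    ClassKL fun r t => a (β r (max (t / M - 1) 0)) + r / (1 + t) := by
  have hM' : (0 : ℝ) < M := by exact_mod_cast hM
  obtain ⟨h1, h2, h3⟩ := hβ
  refine ⟨?_, ?_, ?_⟩
  · refine ContinuousOn.add ?_ ?_
    · refine ha.1.comp (t := Set.Ici 0) ?_ ?_
      · have hg : Continuous fun p : ℝ × ℝ => (p.1, max (p.2 / M - 1) 0) := by fun_prop
        exact h1.comp (f := fun p : ℝ × ℝ => (p.1, max (p.2 / M - 1) 0)) hg.continuousOn
          fun p hp => ⟨hp.1, Set.mem_Ici.2 (le_max_right _ _)⟩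
      · intro p hp
        exact (h2 _ (le_max_right _ _)).nn hp.1
    · refine ContinuousOn.div (by fun_prop) (by fun_prop) ?_
      intro p hp
      have : (0 : ℝ) ≤ p.2 := hp.2
      positivity
  · intro t ht
    refine (ha.comp' (h2 _ (le_max_right _ _))).add' ⟨by fun_prop, ?_, by simp⟩
    intro x _ y _ hxy
    have : (0 : ℝ) < 1 + t := by positivity
    exact div_lt_div_of_pos_right hxy this
  · intro r hr
    obtain ⟨h4, h5⟩ := h3 r hr
    refine ⟨?_, ?_⟩
    · intro x hx y hy hxy
      have hx : (0 : ℝ) ≤ x := hx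
      refine add_lt_add_of_le_of_lt ?_ ?_
      · refine ha.mo ((h2 _ (le_max_right _ _)).nn hr.le) ?_
        refine h4.antitoneOn (Set.mem_Ici.2 (le_max_right _ _))
          (Set.mem_Ici.2 (le_max_right _ _)) ?_
        gcongr
      · apply div_lt_div_of_pos_left hr (by positivity)
        linarith
    · have e1 : Filter.Tendsto (fun t : ℝ => max (t / M - 1) 0) Filter.atTop Filter.atTop := by
        refine Filter.tendsto_atTop_mono (fun t => le_max_left _ _) ?_
        exact Filter.tendsto_atTop_add_const_right _ _
          (Filter.tendsto_id.atTop_div_const hM')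
      have e2 := h5.comp e1
      have e3 : Filter.Tendsto (fun t : ℝ => β r (max (t / M - 1) 0)) Filter.atTop
          (nhdsWithin 0 (Set.Ici 0)) :=
        tendsto_nhdsWithin_iff.2 ⟨e2, Filter.Eventually.of_forall fun t =>
          (h2 _ (le_max_right _ _)).nn hr.le⟩
      have e4 : Filter.Tendsto a (nhdsWithin 0 (Set.Ici 0)) (nhds 0) := by
        have := ha.1 0 (Set.mem_Ici.2 le_rfl)
        rwa [ContinuousWithinAt, ha.2.2] at this
      have e5 : Filter.Tendsto (fun t : ℝ => r / (1 + t)) Filter.atTop (nhds 0) :=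
        Filter.Tendsto.const_div_atTop
          (Filter.tendsto_atTop_add_const_left _ _ Filter.tendsto_id) r
      simpa using (e4.comp e3).add e5

theorem inputNorm_nn (u : ℕ → lp P ⊤) : 0 ≤ inputNorm u :=
  Real.iSup_nonneg fun _ => norm_nonneg _

theorem le_inputNorm {u : ℕ → lp P ⊤} (hu : AdmInput u) (k : ℕ) : ‖u k‖ ≤ inputNorm u := by
  obtain ⟨C, hC⟩ := hu
  exact le_ciSup (f := fun k => ‖u k‖) ⟨C, by rintro _ ⟨k, rfl⟩; exact hC k⟩ k

theorem inputNorm_shift {u : ℕ → lp P ⊤} (hu : AdmInput u) (n : ℕ) :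
    inputNorm (fun k => u (n + k)) ≤ inputNorm u :=
  ciSup_le fun k => le_inputNorm hu (n + k)

theorem traj_shift (F : lp E ⊤ → lp P ⊤ → lp E ⊤) (ξ : lp E ⊤) (u : ℕ → lp P ⊤) (n j : ℕ) :
    traj F ξ u (n + j) = traj F (traj F ξ u n) (fun k => u (n + k)) j := by
  induction j with
  | zero => rfl
  | succ j ih =>
    rw [← Nat.add_assoc]
    simp only [traj, ih]

theorem finite_bound {F : lp E ⊤ → lp P ⊤ → lp E ⊤} {A : Set (lp E ⊤)} (hK : KBounded F A)
    (n : ℕ) : ∃ a b : ℝ → ℝ, ClassK a ∧ ClassK b ∧ ∀ (ξ : lp E ⊤) (u : ℕ → lp P ⊤),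
      AdmInput u → ∀ j ≤ n, Metric.infDist (traj F ξ u j) A ≤
        max (a (Metric.infDist ξ A)) (b (inputNorm u)) := by
  obtain ⟨κ₁, κ₂, h1, h2, h⟩ := hK
  induction n with
  | zero =>
    refine ⟨_, _, ClassK.idK, ClassK.idK, ?_⟩
    intro ξ u hu j hj
    obtain rfl : j = 0 := by omega
    exact le_max_left _ _
  | succ n ih =>
    obtain ⟨a, b, ha, hb, hab⟩ := ih
    have ha2 := h1.comp' ha
    have hb2 := (h1.comp' hb).add' h2
    refine ⟨_, _, ha.add' (ha2.add' ha2), hb.add' (hb2.add' hb2), ?_⟩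
    intro ξ u hu j hj
    have r0 : 0 ≤ Metric.infDist ξ A := Metric.infDist_nonneg
    have s0 := inputNorm_nn u
    have p1 := ha.nn r0
    have p2 := ha2.nn r0
    have q1 := hb.nn s0
    have q2 := (h1.comp' hb).nn s0
    have q3 := h2.nn s0
    rcases Nat.lt_or_ge n j with hj' | hj'
    · obtain rfl : j = n + 1 := by omega
      have hx := hab ξ u hu n le_rfl
      have h3 := h (traj F ξ u n) (u n)
      have h4 := h1.mo Metric.infDist_nonneg hx
      rw [h1.map_max p1 q1] at h4
      have h5 := h2.mo (norm_nonneg _) (le_inputNorm hu n)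
      change Metric.infDist (F (traj F ξ u n) (u n)) A ≤ _
      rcases le_max_iff.1 h4 with h6 | h6
      · rcases le_total (κ₁ (a (Metric.infDist ξ A))) (κ₂ (inputNorm u)) with h7 | h7
        · exact le_max_of_le_right (by linarith)
        · exact le_max_of_le_left (by linarith)
      · exact le_max_of_le_right (by linarith)
    · refine (hab ξ u hu j hj').trans (max_le_max ?_ ?_) <;> linarith

/-- ISS of `Σ` is equivalent to `K`-boundedness of `f` together with ISS of some
`M`-iterate `Σ^M`. -/
theorem stmt6
    [∀ i, NormedSpace ℝ (E i)] [∀ i, FiniteDimensional ℝ (E i)] [∀ i, Nontrivial (E i)]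
    [∀ i, NormedSpace ℝ (P i)] [∀ i, FiniteDimensional ℝ (P i)] [∀ i, Nontrivial (P i)]
    (F : lp E ⊤ → lp P ⊤ → lp E ⊤)
    (A : Set (lp E ⊤)) (hAne : A.Nonempty) (hAcl : IsClosed A) :
    ISS F A ↔
      (KBounded F A ∧
        ∃ M : ℕ, 0 < M ∧ ∃ β γ : _, ClassKL β ∧ ClassK γ ∧
          ∀ (ξ : lp E ⊤) (u : ℕ → lp P ⊤), AdmInput u →
            ∀ k : ℕ, Metric.infDist (traj F ξ u (M * k)) A ≤
              max (β (Metric.infDist ξ A) (k : ℝ)) (γ (inputNorm u))) := by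
  constructor
  · rintro ⟨β, γ, hβ, hγ, h⟩
    refine ⟨⟨fun r => β r 1, γ, hβ.2.1 1 zero_le_one, hγ, ?_⟩, 1, one_pos, β, γ, hβ, hγ, ?_⟩
    · intro ξ μ
      have h1 := h ξ (fun _ => μ) ⟨‖μ‖, fun _ => le_rfl⟩ 1
      have h2 : inputNorm (fun _ : ℕ => μ) = ‖μ‖ := ciSup_const
      rw [h2, Nat.cast_one] at h1
      refine h1.trans (max_le_add_of_nonneg ?_ (hγ.nn (norm_nonneg _)))
      exact (hβ.2.1 1 zero_le_one).nn Metric.infDist_nonneg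
    · intro ξ u hu k
      rw [one_mul]
      exact h ξ u hu k
  · rintro ⟨hK, M, hM, β, γ, hβ, hγ, h⟩
    obtain ⟨a, b, ha, hb, hab⟩ := finite_bound hK M
    refine ⟨_, _, KL_stretch hβ ha hM, (ha.comp' hγ).add' hb, ?_⟩
    intro ξ u hu k
    have hM' : (0 : ℝ) < M := by exact_mod_cast hM
    have r0 : 0 ≤ Metric.infDist ξ A := Metric.infDist_nonneg
    have s0 := inputNorm_nn u
    have hu' : AdmInput fun i => u (M * (k / M) + i) := by
      obtain ⟨C, hC⟩ := hu
      exact ⟨C, fun i => hC _⟩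
    have h1 := hab (traj F ξ u (M * (k / M))) _ hu' (k % M) (Nat.mod_lt _ hM).le
    rw [← traj_shift, Nat.div_add_mod] at h1
    have h2 := hb.mo (inputNorm_nn _) (inputNorm_shift hu (M * (k / M)))
    have hq0 : (0 : ℝ) ≤ ((k / M : ℕ) : ℝ) := Nat.cast_nonneg _
    have hB := (hβ.2.1 _ hq0).nn r0
    have h3 := ha.mo Metric.infDist_nonneg (h ξ u hu (k / M))
    rw [ha.map_max hB (hγ.nn s0)] at h3
    have g1 := ha.nn (hγ.nn s0)
    have g2 := hb.nn s0
    have hk : max ((k : ℝ) / M - 1) 0 ≤ ((k / M : ℕ) : ℝ) := by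
      refine max_le ?_ hq0
      rw [sub_le_iff_le_add, div_le_iff₀ hM']
      have : k ≤ (k / M + 1) * M := by
        have e1 := Nat.div_add_mod k M
        have e2 := Nat.mod_lt k hM
        nlinarith
      exact_mod_cast this
    have hanti : β (Metric.infDist ξ A) ((k / M : ℕ) : ℝ) ≤
        β (Metric.infDist ξ A) (max ((k : ℝ) / M - 1) 0) := by
      rcases r0.eq_or_lt with h0 | h0
      · rw [← h0]
        exact ((hβ.2.1 _ hq0).2.2.trans (hβ.2.1 _ (le_max_right _ _)).2.2.symm).le
      · exact (hβ.2.2 _ h0).1.antitoneOn (Set.mem_Ici.2 (le_max_right _ _)) hq0 hk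
    have h4 := ha.mo hB hanti
    have h5 : 0 ≤ Metric.infDist ξ A / (1 + (k : ℝ)) := by positivity
    rcases le_max_iff.1 h1 with h6 | h6
    · rcases le_max_iff.1 h3 with h7 | h7
      · exact le_max_of_le_left (by linarith)
      · exact le_max_of_le_right (by linarith)
    · exact le_max_of_le_right (by linarith)


end System
end
end

section
/- Let Σ be well-posed and A ⊆ X a nonempty closed set. Then Σ is eISS with respect to A if and only if f is K-bounded with respect to A with κ₁ a linear function, and there exist M ∈ ℕ, constants C ≥ 1, ρ ∈ [0,1) and γ of class K such that for every ξ ∈ X and every admissible input u, |x(Mk,ξ,u)|_A ≤ max{C ρ^k |ξ|_A, γ(‖u‖_∞)} for all k ∈ ℕ₀ (i.e. Σ^M is eISS with respect to A for some M). -/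
noncomputable section

section System

variable {E : ℕ → Type*} [∀ i, NormedAddCommGroup (E i)]
variable {P : ℕ → Type*} [∀ i, NormedAddCommGroup (P i)]

/-- eISS of `Σ` is equivalent to `K`-boundedness of `f` with linear `κ₁` together
with eISS of some `M`-iterate `Σ^M`. -/
theorem stmt7
    [∀ i, NormedSpace ℝ (E i)] [∀ i, FiniteDimensional ℝ (E i)] [∀ i, Nontrivial (E i)]
    [∀ i, NormedSpace ℝ (P i)] [∀ i, FiniteDimensional ℝ (P i)] [∀ i, Nontrivial (P i)]
    (F : lp E ⊤ → lp P ⊤ → lp E ⊤)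
    (A : Set (lp E ⊤)) (hAne : A.Nonempty) (hAcl : IsClosed A) :
    eISS F A ↔
      ((∃ c : ℝ, 0 < c ∧ ∃ κ₂ : ℝ → ℝ, ClassK κ₂ ∧
          ∀ (ξ : lp E ⊤) (μ : lp P ⊤),
            Metric.infDist (F ξ μ) A ≤ c * Metric.infDist ξ A + κ₂ ‖μ‖) ∧
        ∃ M : ℕ, 0 < M ∧ ∃ C ρ : ℝ, ∃ γ : ℝ → ℝ, 1 ≤ C ∧ 0 ≤ ρ ∧ ρ < 1 ∧ ClassK γ ∧
          ∀ (ξ : lp E ⊤) (u : ℕ → lp P ⊤), AdmInput u →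
            ∀ k : ℕ, Metric.infDist (traj F ξ u (M * k)) A ≤
              max (C * ρ ^ k * Metric.infDist ξ A) (γ (inputNorm u))) := by
  constructor
  · rintro ⟨C, ρ, γ, hC, hρ0, hρ1, hγ, h⟩
    refine ⟨⟨C, by linarith, γ, hγ, ?_⟩, 1, one_pos, C, ρ, γ, hC, hρ0, hρ1, hγ, ?_⟩
    · intro ξ μ
      have h1 := h ξ (fun _ => μ) ⟨‖μ‖, fun _ => le_rfl⟩ 1
      have hn : inputNorm (fun _ : ℕ => μ) = ‖μ‖ := by simp [inputNorm]
      rw [hn, pow_one] at h1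
      have h2 : traj F ξ (fun _ => μ) 1 = F ξ μ := rfl
      rw [h2] at h1
      have hd : 0 ≤ Metric.infDist ξ A := Metric.infDist_nonneg
      have hg : 0 ≤ γ ‖μ‖ := by
        have := hγ.2.1.monotoneOn (Set.mem_Ici.2 le_rfl) (Set.mem_Ici.2 (norm_nonneg μ)) (norm_nonneg μ)
        rwa [hγ.2.2] at this
      refine h1.trans (max_le ?_ ?_)
      · have : C * ρ * Metric.infDist ξ A ≤ C * Metric.infDist ξ A := by
          apply mul_le_mul_of_nonneg_right _ hd
          nlinarith
        linarith
      · have : 0 ≤ C * Metric.infDist ξ A := mul_nonneg (by linarith) hd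
        linarith
    · intro ξ u hu k
      rw [one_mul]
      exact h ξ u hu k
  · rintro ⟨⟨c₀, hc₀, κ, hκ, hF⟩, M, hM, C, ρ₀, γ, hC, hρ0, hρ1, hγ, h⟩
    obtain ⟨c, hc0, hc1⟩ : ∃ c, c₀ ≤ c ∧ (1:ℝ) ≤ c := ⟨max c₀ 1, le_max_left _ _, le_max_right _ _⟩
    obtain ⟨ρ, hρρ, hρpos, hρ1⟩ : ∃ ρ, ρ₀ ≤ ρ ∧ 0 < ρ ∧ ρ < 1 :=
      ⟨max ρ₀ (1/2), le_max_left _ _, lt_max_of_lt_right (by norm_num),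
        max_lt hρ1 (by norm_num)⟩
    obtain ⟨σ, hσ0, hσ1, hσM⟩ : ∃ σ : ℝ, 0 < σ ∧ σ < 1 ∧ σ ^ M = ρ :=
      ⟨ρ ^ ((M:ℝ)⁻¹), Real.rpow_pos_of_pos hρpos _,
        Real.rpow_lt_one hρpos.le hρ1 (by positivity),
        Real.rpow_inv_natCast_pow hρpos.le hM.ne'⟩
    have hK1 : 1 ≤ c ^ M := one_le_pow₀ hc1
    have hK0 : 0 < c ^ M := by linarith
    refine ⟨2 * c ^ M * C / ρ, σ, fun s => 2 * c ^ M * (γ s + M * κ s), ?_, hσ0.le, hσ1, ?_, ?_⟩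
    · rw [le_div_iff₀ hρpos]
      nlinarith
    · refine ⟨?_, ?_, ?_⟩
      · exact continuousOn_const.mul (hγ.1.add (continuousOn_const.mul hκ.1))
      · intro a ha b hb hab
        have h1 := hγ.2.1 ha hb hab
        have h2 := hκ.2.1 ha hb hab
        have h3 : (M:ℝ) * κ a ≤ M * κ b := mul_le_mul_of_nonneg_left h2.le (by positivity)
        exact mul_lt_mul_of_pos_left (by linarith) (by positivity)
      · simp [hγ.2.2, hκ.2.2]
    · intro ξ u hu n
      have hUk : ∀ k, ‖u k‖ ≤ inputNorm u := by
        obtain ⟨B, hB⟩ := hu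
        exact fun k => le_ciSup (f := fun k => ‖u k‖) ⟨B, by rintro _ ⟨k, rfl⟩; exact hB k⟩ k
      have hU0 : 0 ≤ inputNorm u := (norm_nonneg _).trans (hUk 0)
      have hκm : ∀ k, κ ‖u k‖ ≤ κ (inputNorm u) := fun k =>
        hκ.2.1.monotoneOn (Set.mem_Ici.2 (norm_nonneg _)) (Set.mem_Ici.2 hU0) (hUk k)
      have hκ0 : 0 ≤ κ (inputNorm u) := by
        have := hκ.2.1.monotoneOn (Set.mem_Ici.2 le_rfl) (Set.mem_Ici.2 hU0) hU0
        rwa [hκ.2.2] at this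
      have hγ0 : 0 ≤ γ (inputNorm u) := by
        have := hγ.2.1.monotoneOn (Set.mem_Ici.2 le_rfl) (Set.mem_Ici.2 hU0) hU0
        rwa [hγ.2.2] at this
      have hstep : ∀ m r : ℕ, Metric.infDist (traj F ξ u (m + r)) A ≤
          c ^ r * (Metric.infDist (traj F ξ u m) A + r * κ (inputNorm u)) := by
        intro m r
        induction r with
        | zero => simp
        | succ r ih =>
          have h1 := hF (traj F ξ u (m + r)) (u (m + r))
          have h2 : traj F ξ u (m + (r + 1)) = F (traj F ξ u (m + r)) (u (m + r)) := rfl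
          rw [h2]
          have h3 : c₀ * Metric.infDist (traj F ξ u (m + r)) A ≤
              c * Metric.infDist (traj F ξ u (m + r)) A :=
            mul_le_mul_of_nonneg_right hc0 Metric.infDist_nonneg
          have h4 := mul_le_mul_of_nonneg_left ih (by linarith : (0:ℝ) ≤ c)
          have h5 : κ (inputNorm u) ≤ c ^ (r + 1) * κ (inputNorm u) :=
            le_mul_of_one_le_left hκ0 (one_le_pow₀ hc1)
          have h6 := hκm (m + r)
          push_cast
          rw [pow_succ] at *
          linarith
      have hr : n % M < M := Nat.mod_lt _ hM
      have hn : M * (n / M) + n % M = n := Nat.div_add_mod n M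
      generalize n / M = k at hn
      generalize n % M = r at hn hr
      subst hn
      have h1 := hstep (M * k) r
      have h2 := h ξ u hu k
      have hd : 0 ≤ Metric.infDist ξ A := Metric.infDist_nonneg
      have hρk : ρ₀ ^ k ≤ σ ^ (M * k + r) / ρ := by
        rw [le_div_iff₀ hρpos, pow_add, pow_mul, hσM]
        have e1 : ρ₀ ^ k ≤ ρ ^ k := pow_le_pow_left₀ hρ0 hρρ k
        have e2 : ρ ≤ σ ^ r := by
          rw [← hσM]; exact pow_le_pow_of_le_one hσ0.le hσ1.le hr.le
        exact mul_le_mul e1 e2 hρpos.le (by positivity)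
      have h3 : C * ρ₀ ^ k * Metric.infDist ξ A ≤
          C * (σ ^ (M * k + r) / ρ) * Metric.infDist ξ A :=
        mul_le_mul_of_nonneg_right (mul_le_mul_of_nonneg_left hρk (by linarith)) hd
      have hrM : (r:ℝ) * κ (inputNorm u) ≤ M * κ (inputNorm u) :=
        mul_le_mul_of_nonneg_right (by exact_mod_cast hr.le) hκ0
      have hMκ : 0 ≤ (M:ℝ) * κ (inputNorm u) := by positivity
      have hcr : c ^ r ≤ c ^ M := pow_le_pow_right₀ hc1 hr.le
      have hnn : 0 ≤ Metric.infDist (traj F ξ u (M * k)) A + r * κ (inputNorm u) :=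
        add_nonneg Metric.infDist_nonneg (by positivity)
      have hc2 := mul_le_mul_of_nonneg_right hcr hnn
      have heq : 2 * c ^ M * C / ρ * σ ^ (M * k + r) * Metric.infDist ξ A =
          2 * c ^ M * (C * (σ ^ (M * k + r) / ρ) * Metric.infDist ξ A) := by ring
      rw [heq]
      have ha : 0 ≤ C * (σ ^ (M * k + r) / ρ) * Metric.infDist ξ A := by positivity
      generalize C * (σ ^ (M * k + r) / ρ) * Metric.infDist ξ A = a at *
      have hm : max (C * ρ₀ ^ k * Metric.infDist ξ A) (γ (inputNorm u)) ≤ a + γ (inputNorm u) :=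
        max_le (by linarith) (by linarith)
      have hfin : Metric.infDist (traj F ξ u (M * k + r)) A ≤
          c ^ M * (a + (γ (inputNorm u) + M * κ (inputNorm u))) :=
        (h1.trans hc2).trans (mul_le_mul_of_nonneg_left (by linarith) hK0.le)
      refine hfin.trans ?_
      beta_reduce
      generalize γ (inputNorm u) + M * κ (inputNorm u) = b
      rcases le_total a b with hab | hab
      · exact le_max_of_le_right (by nlinarith)
      · exact le_max_of_le_left (by nlinarith)

end System
end
end

section
/- Let Σ be a well-posed system on X whose right-hand side f is K-bounded with respect to a nonempty closed set A ⊆ X with κ₁ a linear function. If there exists a finite-step eISS Lyapunov function for Σ with respect to A, then Σ is eISS with respect to A. -/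
noncomputable section

section System

variable {E : ℕ → Type*} [∀ i, NormedAddCommGroup (E i)]
variable {P : ℕ → Type*} [∀ i, NormedAddCommGroup (P i)]

theorem aux_traj_add (F : lp E ⊤ → lp P ⊤ → lp E ⊤) (ξ : lp E ⊤) (u : ℕ → lp P ⊤) (k m : ℕ) :
    traj F (traj F ξ u k) (fun j => u (k + j)) m = traj F ξ u (k + m) := by
  induction m with
  | zero => rfl
  | succ m ih =>
    change F (traj F (traj F ξ u k) (fun j => u (k + j)) m) (u (k + m)) =
      F (traj F ξ u (k + m)) (u (k + m))
    rw [ih]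

theorem aux_le_norm (u : ℕ → lp P ⊤) (hu : AdmInput u) (k : ℕ) : ‖u k‖ ≤ inputNorm u := by
  obtain ⟨C, hC⟩ := hu
  exact le_ciSup (f := fun k => ‖u k‖) ⟨C, by rintro _ ⟨j, rfl⟩; exact hC j⟩ k

theorem aux_norm_nonneg (u : ℕ → lp P ⊤) (hu : AdmInput u) : 0 ≤ inputNorm u :=
  (norm_nonneg _).trans (aux_le_norm u hu 0)

theorem aux_shift_adm (u : ℕ → lp P ⊤) (hu : AdmInput u) (k : ℕ) :
    AdmInput (fun j => u (k + j)) := by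
  obtain ⟨C, hC⟩ := hu
  exact ⟨C, fun j => hC _⟩

theorem aux_shift_norm (u : ℕ → lp P ⊤) (hu : AdmInput u) (k : ℕ) :
    inputNorm (fun j => u (k + j)) ≤ inputNorm u :=
  ciSup_le fun j => aux_le_norm u hu (k + j)

theorem aux_classK_nonneg {γ : ℝ → ℝ} (h : ClassK γ) {s : ℝ} (hs : 0 ≤ s) : 0 ≤ γ s := by
  have := h.2.1.monotoneOn (Set.mem_Ici.2 le_rfl) (Set.mem_Ici.2 hs) hs
  rwa [h.2.2] at this

theorem aux_classK_comb {γ κ₂ : ℝ → ℝ} (hγ : ClassK γ) (hκ : ClassK κ₂) {a w p : ℝ}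
    (ha : 0 < a) (hw : 0 < w) (hp : 0 < p) :
    ClassK (fun s => a * κ₂ s + (γ s / w) ^ p) := by
  refine ⟨?_, ?_, ?_⟩
  · refine (continuousOn_const.mul hκ.1).add ?_
    exact (hγ.1.div_const w).rpow_const fun x _ => Or.inr hp.le
  · intro x hx y hy hxy
    have h1 := hκ.2.1 hx hy hxy
    have h2 := hγ.2.1 hx hy hxy
    have h3 : (γ x / w) ^ p ≤ (γ y / w) ^ p := by
      apply Real.rpow_le_rpow (div_nonneg (aux_classK_nonneg hγ hx) hw.le) _ hp.le
      gcongr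
    have h4 : a * κ₂ x < a * κ₂ y := by gcongr
    exact add_lt_add_of_lt_of_le h4 h3
  · simp [hκ.2.2, hγ.2.2, Real.zero_rpow hp.ne']

set_option maxHeartbeats 1000000 in
/-- Existence of a finite-step eISS Lyapunov function (together with `K`-boundedness
with linear `κ₁`) implies eISS. -/
theorem stmt9
    [∀ i, NormedSpace ℝ (E i)] [∀ i, FiniteDimensional ℝ (E i)] [∀ i, Nontrivial (E i)]
    [∀ i, NormedSpace ℝ (P i)] [∀ i, FiniteDimensional ℝ (P i)] [∀ i, Nontrivial (P i)]
    (F : lp E ⊤ → lp P ⊤ → lp E ⊤)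
    (A : Set (lp E ⊤)) (hAne : A.Nonempty) (hAcl : IsClosed A)
    (c : ℝ) (hc : 0 < c) (κ₂ : ℝ → ℝ) (hκ₂ : ClassK κ₂)
    (hKb : ∀ (ξ : lp E ⊤) (μ : lp P ⊤),
      Metric.infDist (F ξ μ) A ≤ c * Metric.infDist ξ A + κ₂ ‖μ‖)
    (V : lp E ⊤ → ℝ) (hVcont : Continuous V)
    (M : ℕ) (hM : 0 < M)
    (wl wu b : ℝ) (hwl : 0 < wl) (hwu : 0 < wu) (hb : 0 < b)
    (κ : ℝ) (hκ0 : 0 ≤ κ) (hκ1 : κ < 1)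
    (γ : ℝ → ℝ) (hγ : ClassK γ)
    (hsandwich : ∀ ξ : lp E ⊤,
      wl * Metric.infDist ξ A ^ b ≤ V ξ ∧ V ξ ≤ wu * Metric.infDist ξ A ^ b)
    (hdecay : ∀ (ξ : lp E ⊤) (u : ℕ → lp P ⊤), AdmInput u →
      V (traj F ξ u M) ≤ max (κ * V ξ) (γ (inputNorm u))) :
    eISS F A := by
  set c1 : ℝ := max c 1 with hc1
  have hc1' : 1 ≤ c1 := le_max_right _ _
  have hcc1 : c ≤ c1 := le_max_left _ _
  set κ' : ℝ := max κ (1/2) with hκ'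
  have hκ'0 : 0 < κ' := lt_of_lt_of_le (by norm_num) (le_max_right _ _)
  have hκ'1 : κ' < 1 := max_lt hκ1 (by norm_num)
  have hκκ' : κ ≤ κ' := le_max_left _ _
  have hb' : 0 < b⁻¹ := inv_pos.2 hb
  have hMr : (0:ℝ) < M := by exact_mod_cast hM
  set K : ℝ := c1 ^ M with hK
  have hK1 : 1 ≤ K := one_le_pow₀ hc1'
  set W : ℝ := (wu / wl) ^ b⁻¹ with hW
  have hW0 : 0 < W := Real.rpow_pos_of_pos (div_pos hwu hwl) _
  set q : ℝ := κ' ^ b⁻¹ with hq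
  have hq0 : 0 < q := Real.rpow_pos_of_pos hκ'0 _
  have hq1 : q < 1 := Real.rpow_lt_one hκ'0.le hκ'1 hb'
  set ρ : ℝ := q ^ (M:ℝ)⁻¹ with hρ
  have hρ0 : 0 < ρ := Real.rpow_pos_of_pos hq0 _
  have hρ1 : ρ < 1 := Real.rpow_lt_one hq0.le hq1 (inv_pos.2 hMr)
  have hρM : ρ ^ M = q := Real.rpow_inv_natCast_pow hq0.le hM.ne'
  refine ⟨max 1 (W * (2 * K) / q), ρ, fun s => (W * (2 * K * M)) * κ₂ s + (γ s / wl) ^ b⁻¹,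
    le_max_left _ _, hρ0.le, hρ1, aux_classK_comb hγ hκ₂ (by positivity) hwl hb', ?_⟩
  intro ξ u hu k
  set s := inputNorm u with hs
  have hs0 : 0 ≤ s := aux_norm_nonneg u hu
  have hγ0 : 0 ≤ γ s := aux_classK_nonneg hγ hs0
  have hκ0' : 0 ≤ κ₂ s := aux_classK_nonneg hκ₂ hs0
  have hd0 : 0 ≤ Metric.infDist ξ A := Metric.infDist_nonneg
  -- finite horizon bound
  have hfin : ∀ r : ℕ, Metric.infDist (traj F ξ u r) A ≤
      c1 ^ r * (Metric.infDist ξ A + r * κ₂ s) := by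
    intro r
    induction r with
    | zero => simp [traj]
    | succ r ih =>
      have h1 := hKb (traj F ξ u r) (u r)
      have h2 : κ₂ ‖u r‖ ≤ κ₂ s :=
        hκ₂.2.1.monotoneOn (Set.mem_Ici.2 (norm_nonneg _)) (Set.mem_Ici.2 hs0) (aux_le_norm u hu r)
      have h3 : c * Metric.infDist (traj F ξ u r) A ≤
          c1 * (c1 ^ r * (Metric.infDist ξ A + r * κ₂ s)) :=
        mul_le_mul hcc1 ih Metric.infDist_nonneg (by positivity)
      have h4 : κ₂ s ≤ c1 ^ (r+1) * κ₂ s := le_mul_of_one_le_left hκ0' (one_le_pow₀ hc1')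
      change Metric.infDist (F (traj F ξ u r) (u r)) A ≤ _
      push_cast
      calc _ ≤ _ := h1
        _ ≤ c1 * (c1 ^ r * (Metric.infDist ξ A + r * κ₂ s)) + c1 ^ (r+1) * κ₂ s := by linarith
        _ = _ := by ring
  have hV0 : ∀ x, 0 ≤ V x := fun x =>
    le_trans (mul_nonneg hwl.le (Real.rpow_nonneg Metric.infDist_nonneg _)) (hsandwich x).1
  -- iterated decay
  have hdec : ∀ (r n : ℕ), V (traj F ξ u (r + M * n)) ≤ max (κ' ^ n * V (traj F ξ u r)) (γ s) := by
    intro r n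
    induction n with
    | zero => simp
    | succ n ih =>
      have h1 := hdecay (traj F ξ u (r + M * n)) _ (aux_shift_adm u hu (r + M * n))
      rw [aux_traj_add, show r + M * n + M = r + M * (n+1) by ring] at h1
      have h2 : γ (inputNorm fun j => u (r + M * n + j)) ≤ γ s :=
        hγ.2.1.monotoneOn (Set.mem_Ici.2 (aux_norm_nonneg _ (aux_shift_adm u hu _)))
          (Set.mem_Ici.2 hs0) (aux_shift_norm u hu _)
      refine h1.trans (max_le ?_ (h2.trans (le_max_right _ _)))
      have h3 : κ * V (traj F ξ u (r + M * n)) ≤ κ' * max (κ' ^ n * V (traj F ξ u r)) (γ s) :=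
        mul_le_mul hκκ' ih (hV0 _) hκ'0.le
      refine h3.trans ?_
      rw [mul_max_of_nonneg _ _ hκ'0.le]
      apply max_le_max
      · rw [pow_succ']; exact le_of_eq (by ring)
      · exact mul_le_of_le_one_left hγ0 hκ'1.le
  set r := k % M with hr
  set n := k / M with hn
  have hk : r + M * n = k := Nat.mod_add_div k M
  have hrM : r ≤ M := (Nat.mod_lt k hM).le
  have hdr : Metric.infDist (traj F ξ u r) A ≤ K * (Metric.infDist ξ A + M * κ₂ s) := by
    refine (hfin r).trans ?_
    have : c1 ^ r ≤ K := pow_le_pow_right₀ hc1' hrM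
    have : (r:ℝ) ≤ M := by exact_mod_cast hrM
    gcongr
  have h1 := hdec r n
  rw [hk] at h1
  set D := Metric.infDist (traj F ξ u k) A with hD
  set Dr := Metric.infDist (traj F ξ u r) A with hDr
  have hD0 : 0 ≤ D := Metric.infDist_nonneg
  have hDr0 : 0 ≤ Dr := Metric.infDist_nonneg
  have hG0 : 0 ≤ (γ s / wl) ^ b⁻¹ := Real.rpow_nonneg (div_nonneg hγ0 hwl.le) _
  have hDb : D = (D ^ b) ^ b⁻¹ := (Real.rpow_rpow_inv hD0 hb.ne').symm
  have hlow := (hsandwich (traj F ξ u k)).1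
  rcases le_max_iff.1 h1 with h | h
  · have h2 : D ^ b ≤ (wu / wl) * (κ' ^ n * Dr ^ b) := by
      rw [div_mul_eq_mul_div, le_div_iff₀ hwl]
      have h5 : κ' ^ n * V (traj F ξ u r) ≤ κ' ^ n * (wu * Dr ^ b) :=
        mul_le_mul_of_nonneg_left (hsandwich _).2 (by positivity)
      linarith
    have h3 : D ≤ W * (q ^ n * Dr) := by
      calc D = (D ^ b) ^ b⁻¹ := hDb
        _ ≤ ((wu / wl) * (κ' ^ n * Dr ^ b)) ^ b⁻¹ :=
          Real.rpow_le_rpow (by positivity) h2 hb'.le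
        _ = W * (q ^ n * Dr) := by
          rw [Real.mul_rpow (by positivity) (by positivity),
            Real.mul_rpow (by positivity) (by positivity), Real.rpow_rpow_inv hDr0 hb.ne',
            ← Real.rpow_pow_comm hκ'0.le]
    have hqn1 : q ^ n ≤ 1 := pow_le_one₀ hq0.le hq1.le
    have hqn : q ^ n ≤ ρ ^ k / q := by
      rw [le_div_iff₀ hq0, ← hρM, ← pow_mul, ← pow_add]
      refine pow_le_pow_of_le_one hρ0.le hρ1.le ?_
      omega
    rcases le_total (M * κ₂ s) (Metric.infDist ξ A) with h6 | h6
    · refine le_max_of_le_left (h3.trans ?_)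
      have h7 : Dr ≤ 2 * K * Metric.infDist ξ A := by
        have h8 := mul_le_mul_of_nonneg_left h6 (zero_le_one.trans hK1)
        linarith
      calc W * (q ^ n * Dr) ≤ W * (ρ ^ k / q * (2 * K * Metric.infDist ξ A)) := by gcongr
        _ = (W * (2 * K) / q) * ρ ^ k * Metric.infDist ξ A := by ring
        _ ≤ _ := by gcongr; exact le_max_right _ _
    · refine le_max_of_le_right (h3.trans ?_)
      have h7 : Dr ≤ 2 * K * (M * κ₂ s) := by
        have h8 := mul_le_mul_of_nonneg_left h6 (zero_le_one.trans hK1)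
        linarith
      calc W * (q ^ n * Dr) ≤ W * (1 * (2 * K * (M * κ₂ s))) := by gcongr
        _ = (W * (2 * K * M)) * κ₂ s := by ring
        _ ≤ _ := le_add_of_nonneg_right hG0
  · refine le_max_of_le_right ?_
    have h2 : D ^ b ≤ γ s / wl := by
      rw [le_div_iff₀ hwl]; linarith
    have h3 : D ≤ (γ s / wl) ^ b⁻¹ := by
      rw [hDb]; exact Real.rpow_le_rpow (by positivity) h2 hb'.le
    exact h3.trans (le_add_of_nonneg_left (by positivity))

end System
end
end

section
/- Consider the network on X = ℓ∞(ℕ,ℝ) given by x_i⁺ = (i/(i+1)) x_i + u, i ∈ ℕ, where all subsystems share the common scalar input u ∈ ℝ. For every ε > 0, the solution starting from the zero initial state with the constant input u(k) ≡ ε satisfies |x(k)|_∞ = ε·k for every k ∈ ℕ₀, so the trajectory is unbounded. Consequently, this network is not ISS with respect to {0}: there are no β of class KL and γ of class K such that |x(k,ξ,u)|_∞ ≤ max{β(|ξ|_∞, k), γ(‖u‖_∞)} for all k ∈ ℕ₀, all ξ ∈ X and all bounded inputs u. -/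
noncomputable section

/-- Solution of the network `x_i⁺ = (i/(i+1)) x_i + u` (indices `i = 1, 2, …`,
here realized by the coefficient `(i+1)/(i+2)` for `i : ℕ`), where all subsystems
share the common scalar input `u`. -/
def traj18 (ξ : ℕ → ℝ) (u : ℕ → ℝ) : ℕ → ℕ → ℝ
  | 0 => ξ
  | k + 1 => fun i => ((i : ℝ) + 1) / ((i : ℝ) + 2) * traj18 ξ u k i + u k

theorem traj18_bd (ε : ℝ) (hε : 0 < ε) (k i : ℕ) :
    0 ≤ traj18 (fun _ => 0) (fun _ => ε) k i ∧
      traj18 (fun _ => 0) (fun _ => ε) k i ≤ ε * k := by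
  induction k with
  | zero => simp [traj18]
  | succ k ih =>
    obtain ⟨h0, h1⟩ := ih
    have hc0 : (0 : ℝ) ≤ ((i : ℝ) + 1) / ((i : ℝ) + 2) := by positivity
    have hc1 : ((i : ℝ) + 1) / ((i : ℝ) + 2) ≤ 1 := by
      rw [div_le_one (by positivity)]; linarith
    simp only [traj18]
    push_cast
    constructor
    · positivity
    · have := mul_le_of_le_one_left h0 hc1
      linarith

theorem traj18_lim (ε : ℝ) (k : ℕ) :
    Filter.Tendsto (fun i => traj18 (fun _ => 0) (fun _ => ε) k i) Filter.atTop
      (nhds (ε * k)) := by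
  have hc : Filter.Tendsto (fun i : ℕ => ((i : ℝ) + 1) / ((i : ℝ) + 2)) Filter.atTop
      (nhds 1) := by
    have h := (tendsto_natCast_div_add_atTop (1 : ℝ)).comp (Filter.tendsto_add_atTop_nat 1)
    refine h.congr fun i => ?_
    simp only [Function.comp]
    push_cast
    congr 1
    ring
  induction k with
  | zero => simp [traj18]
  | succ k ih =>
    have h := (hc.mul ih).add_const ε
    simp only [traj18]
    convert h using 2
    push_cast
    ring

theorem traj18_sup (ε : ℝ) (hε : 0 < ε) (k : ℕ) :
    (⨆ i, |traj18 (fun _ => 0) (fun _ => ε) k i|) = ε * k := by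
  have hb : ∀ i, |traj18 (fun _ => 0) (fun _ => ε) k i| ≤ ε * k := fun i => by
    rw [abs_of_nonneg (traj18_bd ε hε k i).1]; exact (traj18_bd ε hε k i).2
  refine le_antisymm (ciSup_le hb) ?_
  refine le_of_tendsto' (traj18_lim ε k) fun i => (le_abs_self _).trans ?_
  exact le_ciSup (f := fun i => |traj18 (fun _ => 0) (fun _ => ε) k i|)
    ⟨ε * k, by rintro _ ⟨i, rfl⟩; exact hb i⟩ i

/-- The network `x_i⁺ = (i/(i+1)) x_i + u` exhibits unbounded trajectories for
arbitrarily small constant inputs, hence it is not ISS with respect to `{0}`. -/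
theorem stmt18 :
    (∀ ε : ℝ, 0 < ε → ∀ k : ℕ,
      (⨆ i, |traj18 (fun _ => 0) (fun _ => ε) k i|) = ε * k) ∧
    ¬ ∃ β γ : _, ClassKL β ∧ ClassK γ ∧
        ∀ ξ : ℕ → ℝ, (∃ C : ℝ, ∀ i, |ξ i| ≤ C) →
          ∀ u : ℕ → ℝ, (∃ C : ℝ, ∀ k, |u k| ≤ C) →
            ∀ k : ℕ, (⨆ i, |traj18 ξ u k i|) ≤
              max (β (⨆ i, |ξ i|) (k : ℝ)) (γ (⨆ k, |u k|)) := by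
  refine ⟨traj18_sup, ?_⟩
  rintro ⟨β, γ, hβ, -, h⟩
  obtain ⟨k, hk⟩ := exists_nat_gt (max 0 (γ 1))
  have h1 := h (fun _ => 0) ⟨0, by simp⟩ (fun _ => 1) ⟨1, by simp⟩ k
  rw [traj18_sup 1 one_pos k] at h1
  have h0 : β 0 k = 0 := (hβ.2.1 k (Nat.cast_nonneg k)).2.2
  simp only [abs_zero, abs_one, ciSup_const, h0] at h1
  linarith
end
end
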